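/- arXiv:2510.00912 — 4 statements merged into one kernel-verified Lean document; each statement's English description precedes it below -/
import Mathlib

section
/- Let V be a commutative quantale whose unit k is totally compact (for every subset S ⊆ V, k ≤ ⨆ S implies k ≤ s for some s ∈ S) and satisfies: for all u, v ∈ V, k ≤ u ⊗ v implies k ≤ u and k ≤ v. Then every V-category is Lawvere complete: every adjoint pair of V-distributors (φ : E ⇸ X) ⊣ (ψ : X ⇸ E) on any V-category (X,d) is representable. -/
/-!
Total compactness of the unit turns the supremum in `k ≤ ⨆ c, ψ c ⊗ φ c` into a single index `c`
with `k ≤ ψ c ⊗ φ c`, hence with `k ≤ φ c` and `k ≤ ψ c`. Such a `c` represents the pair: `k ≤ φ c`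
yields `d c b ≤ φ b` as in the Yoneda lemma, `k ≤ ψ c` and the counit yield `φ b ≤ d c b`, and
dually for `ψ`.
-/

section Distributor

variable {V X : Type*}

/-- An element is totally compact if it lies below some member of every set whose supremum it lies
below. The set may be empty, so `⊥` is not totally compact. -/
def IsTotallyCompact [CompleteLattice V] (k : V) : Prop :=
  ∀ S : Set V, k ≤ sSup S → ∃ s ∈ S, k ≤ s

/-- `V`-distributors `φ : E ⇸ X` from the one-point `V`-category `E` to the `V`-graph `(X, d)`,
encoded as functions on `X`. -/
def IsDistributorFromPoint [Mul V] [LE V] (d : X → X → V) (φ : X → V) : Prop :=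
  ∀ a b, d a b * φ a ≤ φ b

/-- `V`-distributors `ψ : X ⇸ E` from the `V`-graph `(X, d)` to the one-point `V`-category `E`,
encoded as functions on `X`. -/
def IsDistributorToPoint [Mul V] [LE V] (d : X → X → V) (ψ : X → V) : Prop :=
  ∀ a b, ψ b * d a b ≤ ψ a

/-- The adjunction `φ ⊣ ψ` of distributors `φ : E ⇸ X` and `ψ : X ⇸ E`, given by its unit and counit
inequalities. -/
structure IsDistributorAdjunction [MulOneClass V] [CompleteLattice V]
    (d : X → X → V) (φ ψ : X → V) : Prop where
  unit : 1 ≤ ⨆ c, ψ c * φ c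
  counit : ∀ a b, φ b * ψ a ≤ d a b

/-- The point `x` represents the pair `(φ, ψ)` if `φ = d(x, -)` and `ψ = d(-, x)`. -/
def Represents (d : X → X → V) (φ ψ : X → V) (x : X) : Prop :=
  (∀ b, φ b = d x b) ∧ ∀ a, ψ a = d a x

/-- Lawvere completeness: adjoint pairs of distributors between the one-point `V`-category and
the `V`-graph `(X, d)` are representable. -/
def IsLawvereComplete [MulOneClass V] [CompleteLattice V] (d : X → X → V) : Prop :=
  ∀ φ ψ : X → V, IsDistributorFromPoint d φ → IsDistributorToPoint d ψ →
    IsDistributorAdjunction d φ ψ → ∃ x, Represents d φ ψ x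

theorem IsTotallyCompact.exists_le_of_le_iSup {ι : Sort*} [CompleteLattice V] {k : V}
    (hk : IsTotallyCompact k) {f : ι → V} (h : k ≤ ⨆ i, f i) : ∃ i, k ≤ f i :=
  Set.exists_range_iff.mp (hk (Set.range f) h)

theorem IsDistributorFromPoint.hom_le [MulOneClass V] [Preorder V] [MulLeftMono V]
    {d : X → X → V} {φ : X → V} (hφ : IsDistributorFromPoint d φ) {c : X} (hc : 1 ≤ φ c) (b : X) :
    d c b ≤ φ b :=
  (le_mul_of_one_le_right' hc).trans (hφ c b)

theorem IsDistributorToPoint.hom_le [MulOneClass V] [Preorder V] [MulRightMono V]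
    {d : X → X → V} {ψ : X → V} (hψ : IsDistributorToPoint d ψ) {c : X} (hc : 1 ≤ ψ c) (a : X) :
    d a c ≤ ψ a :=
  (le_mul_of_one_le_left' hc).trans (hψ a c)

theorem represents_of_one_le [MulOneClass V] [PartialOrder V] [MulLeftMono V] [MulRightMono V]
    {d : X → X → V} {φ ψ : X → V} (hφ : IsDistributorFromPoint d φ)
    (hψ : IsDistributorToPoint d ψ) (hcounit : ∀ a b, φ b * ψ a ≤ d a b) {c : X}
    (hφc : 1 ≤ φ c) (hψc : 1 ≤ ψ c) : Represents d φ ψ c where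
  left b := le_antisymm ((le_mul_of_one_le_right' hψc).trans (hcounit c b)) (hφ.hom_le hφc b)
  right a := le_antisymm ((le_mul_of_one_le_left' hφc).trans (hcounit a c)) (hψ.hom_le hψc a)

theorem stmt2_general [MulOneClass V] [CompleteLattice V] [MulLeftMono V] [MulRightMono V]
    (hcompact : IsTotallyCompact (1 : V)) (hsplit : ∀ u v : V, 1 ≤ u * v → 1 ≤ u ∧ 1 ≤ v)
    (d : X → X → V) : IsLawvereComplete d := by
  intro φ ψ hφ hψ hadj
  obtain ⟨c, hc⟩ := hcompact.exists_le_of_le_iSup hadj.unit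
  obtain ⟨hψc, hφc⟩ := hsplit _ _ hc
  exact ⟨c, represents_of_one_le hφ hψ hadj.counit hφc hψc⟩

end Distributor

/-- The commutative monoid given by an operation and a unit passed as explicit arguments. -/
abbrev commMonoidOfRightUnit {V : Type*} (mul : V → V → V) (k : V)
    (hcomm : ∀ u v, mul u v = mul v u) (hassoc : ∀ u v w, mul (mul u v) w = mul u (mul v w))
    (hunit : ∀ u, mul u k = u) : CommMonoid V where
  mul := mul
  one := k
  mul_assoc := hassoc
  mul_comm := hcomm
  mul_one := hunit
  one_mul u := (hcomm k u).trans (hunit u)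

theorem isQuantale_of_mul_sSup {V : Type*} [CommSemigroup V] [CompleteLattice V]
    (h : ∀ (u : V) (S : Set V), u * sSup S = ⨆ v ∈ S, u * v) : IsQuantale V where
  mul_sSup_distrib := h
  sSup_mul_distrib S u := by simpa only [mul_comm] using h u S

/-- If the unit `k` of a commutative quantale `V` is totally compact
and `k ≤ u ⊗ v` implies `k ≤ u` and `k ≤ v`, then every `V`-category is Lawvere
complete: every adjoint pair of `V`-distributors is representable. -/
theorem stmt2 {V : Type*} [CompleteLattice V] (mul : V → V → V) (k : V)
    (hmul_comm : ∀ u v : V, mul u v = mul v u)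
    (hmul_assoc : ∀ u v w : V, mul (mul u v) w = mul u (mul v w))
    (hmul_unit : ∀ u : V, mul u k = u)
    (hmul_sSup : ∀ (u : V) (S : Set V), mul u (sSup S) = ⨆ v ∈ S, mul u v)
    (hcompact : ∀ S : Set V, k ≤ sSup S → ∃ s ∈ S, k ≤ s)
    (hsplit : ∀ u v : V, k ≤ mul u v → k ≤ u ∧ k ≤ v) :
    ∀ (X : Type*) (d : X → X → V),
      (∀ x : X, k ≤ d x x) →
      (∀ x y z : X, mul (d y z) (d x y) ≤ d x z) →
      ∀ φ ψ : X → V,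
        (∀ a b : X, mul (d a b) (φ a) ≤ φ b) →
        (∀ a b : X, mul (ψ b) (d a b) ≤ ψ a) →
        (k ≤ ⨆ c : X, mul (ψ c) (φ c)) →
        (∀ a b : X, mul (φ b) (ψ a) ≤ d a b) →
        ∃ x : X, (∀ b : X, φ b = d x b) ∧ (∀ a : X, ψ a = d a x) := by
  let := commMonoidOfRightUnit mul k hmul_comm hmul_assoc hmul_unit
  have := isQuantale_of_mul_sSup hmul_sSup
  exact fun _ d _ _ φ ψ hφ hψ hunit hcounit =>
    stmt2_general hcompact hsplit d φ ψ hφ hψ ⟨hunit, hcounit⟩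
end

section
/- Let V be a commutative quantale, (A_n, ν_n)_{n ∈ ℕ} a sequence of V-normed sets with connecting maps s_{m,n} : A_m → A_n for m ≤ n satisfying s_{n,n} = id and s_{n,l} ∘ s_{m,n} = s_{m,l} for m ≤ n ≤ l, and γ_n : A_n → A maps with γ_m = γ_n ∘ s_{m,n} for m ≤ n. Equip A with the norm |a| = ⨅_{N ∈ ℕ} ⨆_{n ≥ N} ⨆_{a' ∈ γ_n⁻¹(a)} ν_n a'. Then for every K ∈ ℕ, ⨅_{n ≥ K} |s_{K,n}| ≤ |γ_K|, where |s_{K,n}| = ⨅_{a ∈ A_K} [ν_K a, ν_n(s_{K,n} a)] and |γ_K| = ⨅_{a ∈ A_K} [ν_K a, |γ_K a|]. -/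
/-!
Since `[u, -]` is a right adjoint, the norm of a map sends an infimum of norms on its codomain to
the infimum of the norms of the map. The norm on the vertex is the infimum over `N` of the norms
taking suprema over the stages `n ≥ N`, so `γ_K` may be treated for one `N` at a time. There, choose
a stage `n` above both `K` and `N`: the element `s_{K,n} a` lies in the fibre of `γ_n` over `γ_K a`,
whence `|s_{K,n}| ≤ |γ_K|` for the norm of the `N`-th tail.
-/

section MapNorm

variable {V X Y Z : Type*} [CompleteLattice V] {hom : V → V → V}

/-- The norm `|f| = ⨅ x, [|x|, |f x|]` of a map `f` between sets normed by `μ` and `ν`, where the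
binary operation `hom` plays the role of the internal hom `[-, -]`. -/
def mapNorm (hom : V → V → V) (μ : X → V) (ν : Y → V) (f : X → Y) : V :=
  ⨅ x, hom (μ x) (ν (f x))

theorem mapNorm_le_mapNorm (hom_mono : ∀ u, Monotone (hom u)) {μ : X → V} {ν : Y → V} {ρ : Z → V}
    {f : X → Y} {g : X → Z} (h : ∀ x, ν (f x) ≤ ρ (g x)) :
    mapNorm hom μ ν f ≤ mapNorm hom μ ρ g :=
  iInf_mono fun x => hom_mono (μ x) (h x)

theorem mapNorm_iInf {tensor : V → V → V}
    (gc : ∀ u, GaloisConnection (fun w => tensor w u) (hom u)) {κ : Sort*}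
    (μ : X → V) (ν : κ → Y → V) (f : X → Y) :
    mapNorm hom μ (fun y => ⨅ i, ν i y) f = ⨅ i, mapNorm hom μ (ν i) f := by
  simp only [mapNorm, (gc _).u_iInf]
  exact iInf_comm

end MapNorm

section ColimitNorm

variable {V ι L : Type*} [CompleteLattice V] [Preorder ι] {A : ι → Type*}

/-- The norm on the vertex of a cocone `γ` given by the supremum of `ν n` over the fibres of `γ n`,
for all stages `n ≥ N`. -/
def tailNorm (ν : ∀ n, A n → V) (γ : ∀ n, A n → L) (N : ι) (b : L) : V :=
  ⨆ n, ⨆ _ : N ≤ n, ⨆ a : {a : A n // γ n a = b}, ν n a.1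

/-- The canonical norm on the vertex of a cocone `γ`: the limit superior over the stages `n` of the
suprema of `ν n` over the fibres of `γ n`, written as the infimum of the tail norms. -/
def colimitNorm (ν : ∀ n, A n → V) (γ : ∀ n, A n → L) (b : L) : V :=
  ⨅ N, tailNorm ν γ N b

theorem le_tailNorm (ν : ∀ n, A n → V) {γ : ∀ n, A n → L} {N n : ι} (hn : N ≤ n) {a : A n} {b : L}
    (hab : γ n a = b) : ν n a ≤ tailNorm ν γ N b :=
  le_iSup₂_of_le n hn <|
    le_iSup (fun a' : {a' : A n // γ n a' = b} => ν n a'.1) ⟨a, hab⟩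

theorem stmt7_general [IsDirectedOrder ι] {tensor hom : V → V → V}
    (gc : ∀ u, GaloisConnection (fun w => tensor w u) (hom u))
    (ν : ∀ n, A n → V) (γ : ∀ n, A n → L) {K : ι} (s : ∀ n, K ≤ n → A K → A n)
    (hγ : ∀ n (h : K ≤ n) (a : A K), γ n (s n h a) = γ K a) :
    ⨅ n, ⨅ h : K ≤ n, mapNorm hom (ν K) (ν n) (s n h) ≤
      mapNorm hom (ν K) (colimitNorm ν γ) (γ K) := by
  have vertex_norm : mapNorm hom (ν K) (colimitNorm ν γ) (γ K) =
      ⨅ N, mapNorm hom (ν K) (tailNorm ν γ N) (γ K) :=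
    mapNorm_iInf gc (ν K) (tailNorm ν γ) (γ K)
  rw [vertex_norm]
  refine le_iInf fun N => ?_
  obtain ⟨n, hKn, hNn⟩ := exists_ge_ge K N
  calc ⨅ n, ⨅ h : K ≤ n, mapNorm hom (ν K) (ν n) (s n h)
      ≤ mapNorm hom (ν K) (ν n) (s n hKn) := iInf₂_le n hKn
    _ ≤ mapNorm hom (ν K) (tailNorm ν γ N) (γ K) :=
      mapNorm_le_mapNorm (fun u => (gc u).monotone_u) fun a => le_tailNorm ν hNn (hγ n hKn a)

end ColimitNorm

/-- With the canonical norm on the vertex of a cocone `γ` over a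
sequence of `V`-normed sets with connecting maps `s`, for every `K` one has
`⨅_{n ≥ K} |s_{K,n}| ≤ |γ_K|`. -/
theorem stmt7 {V : Type*} [CompleteLattice V] (mul : V → V → V) (k : V)
    (hom : V → V → V)
    (hmul_comm : ∀ u v : V, mul u v = mul v u)
    (hmul_assoc : ∀ u v w : V, mul (mul u v) w = mul u (mul v w))
    (hmul_unit : ∀ u : V, mul u k = u)
    (hmul_sSup : ∀ (u : V) (S : Set V), mul u (sSup S) = ⨆ v ∈ S, mul u v)
    (hhom : ∀ u v w : V, mul w u ≤ v ↔ w ≤ hom u v)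
    (A : ℕ → Type*) (ν : ∀ n, A n → V)
    (s : ∀ {m n : ℕ}, m ≤ n → A m → A n)
    (hs_id : ∀ (n : ℕ) (a : A n), s (le_refl n) a = a)
    (hs_comp : ∀ {m n l : ℕ} (h₁ : m ≤ n) (h₂ : n ≤ l) (a : A m),
      s h₂ (s h₁ a) = s (h₁.trans h₂) a)
    {L : Type*} (γ : ∀ n, A n → L)
    (hγ : ∀ {m n : ℕ} (h : m ≤ n) (a : A m), γ m a = γ n (s h a)) :
    ∀ K : ℕ,
      (⨅ n : ℕ, ⨅ h : K ≤ n, ⨅ a : A K, hom (ν K a) (ν n (s h a)))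
        ≤ ⨅ a : A K,
            hom (ν K a)
              (⨅ M : ℕ, ⨆ m : ℕ, ⨆ _ : M ≤ m, ⨆ a' : {a' : A m // γ m a' = γ K a}, ν m a'.1) :=
  fun _ => stmt7_general (fun u w v => hhom u v w) ν γ (fun _ h => s h) fun _ h a => (hγ h a).symm
end

section
/- Let V be a commutative quantale whose unit k is approximated from totally below: k = ⨆{ε ∈ V : ε ⋘ k}, where ε ⋘ k means that for every subset S ⊆ V, k ≤ ⨆ S implies ε ≤ s for some s ∈ S. Let (X_n, D_n)_{n ∈ ℕ} be a sequence of V-categories with connecting maps s_{m,n} : X_m → X_n for m ≤ n (s_{n,n} = id, s_{n,l} ∘ s_{m,n} = s_{m,l}), Cauchy with respect to the Lipschitz norm |f| = ⨅_{x,y} [D(x,y), D'(f x, f y)], i.e., k ≤ ⨆_{N ∈ ℕ} ⨅_{N ≤ m ≤ n} |s_{m,n}|. Let γ_n : X_n → X be a colimit cocone of the underlying sequence of sets (γ_m = γ_n ∘ s_{m,n}; every x ∈ X equals γ_n(x') for some n, x'; and γ_n x' = γ_m x'' implies s_{n,l} x' = s_{m,l} x'' for some l ≥ n, m). Define D(x,y)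 = ⨅_{N ∈ ℕ} ⨆_{n ≥ N} ⨆_{x' ∈ γ_n⁻¹(x), y' ∈ γ_n⁻¹(y)} D_n x' y'. Then (X, D) is a V-category: k ≤ D x x for all x, and D x y ⊗ D y z ≤ D x z for all x, y, z. -/
/-!
Let `c_N` be the infimum of the Lipschitz norms `|s_{m,n}|` with `N ≤ m ≤ n`, so that
`c_N ⊗ D_m x' y' ≤ D_l (s x') (s y')` whenever `N ≤ m ≤ l`. Since `⊗` preserves suprema, the Cauchy
condition `k ≤ ⨆_N c_N` gives `D(x, y) = k ⊗ D(x, y) ≤ ⨆_N c_N ⊗ D(x, y)`. This bounds `D(x, y)`, a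
limit superior of the distances between representatives `x'`, `y'`, by the supremum over late `m` of
the distances `⨅_{l ≥ m} D_l (s x') (s y')` which survive at *every* later stage. In the triangle
inequality the two representatives of the middle point agree at some later stage `l`, both surviving
distances are available there, and the triangle inequality of `D_l` applies.
-/

/-- The distance on the vertex of a cocone `γ` over a sequence of `V`-distance
sets: `D(x,y) = ⨅_N ⨆_{n ≥ N} ⨆_{x' ∈ γ_n⁻¹(x), y' ∈ γ_n⁻¹(y)} D_n x' y'`. -/
def colimDist {V : Type*} [CompleteLattice V] {X : ℕ → Type*}
    (D : ∀ n, X n → X n → V) {L : Type*} (γ : ∀ n, X n → L) (x y : L) : V :=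
  ⨅ N : ℕ, ⨆ n : ℕ, ⨆ _ : N ≤ n,
    ⨆ x' : {x' : X n // γ n x' = x}, ⨆ y' : {y' : X n // γ n y' = y}, D n x'.1 y'.1

/-- The commutative monoid with multiplication `mul` and unit `k`, which lets an unbundled quantale
be treated as an `IsQuantale`. -/
abbrev commMonoidOfMul {V : Type*} (mul : V → V → V) (k : V)
    (mul_comm : ∀ u v, mul u v = mul v u)
    (mul_assoc : ∀ u v w, mul (mul u v) w = mul u (mul v w))
    (mul_unit : ∀ u, mul u k = u) : CommMonoid V where
  mul := mul
  mul_assoc := mul_assoc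
  one := k
  one_mul u := (mul_comm k u).trans (mul_unit u)
  mul_one := mul_unit
  mul_comm := mul_comm

theorem eq_leftMulResiduation {V : Type*} [Semigroup V] [CompleteLattice V] [IsQuantale V]
    {hom : V → V → V} (h : ∀ u v w, w * u ≤ v ↔ w ≤ hom u v) :
    hom = Quantale.leftMulResiduation := by
  funext u v
  exact eq_of_forall_le_iff fun w =>
    (h u v w).symm.trans Quantale.leftMulResiduation_le_iff_mul_le.symm

open scoped Quantale in
/-- The Lipschitz norm of `f`; the internal hom of the quantale is Mathlib's left residuation. -/
def lipNorm {V X Y : Type*} [Semigroup V] [CompleteLattice V]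
    (D : X → X → V) (D' : Y → Y → V) (f : X → Y) : V :=
  ⨅ x, ⨅ y, D x y ⇨ₗ D' (f x) (f y)

theorem lipNorm_mul_le {V X Y : Type*} [Semigroup V] [CompleteLattice V] [IsQuantale V]
    (D : X → X → V) (D' : Y → Y → V) (f : X → Y) (x y : X) :
    lipNorm D D' f * D x y ≤ D' (f x) (f y) :=
  Quantale.leftMulResiduation_le_iff_mul_le.mp ((iInf_le _ x).trans (iInf_le _ y))

/-- `D` makes `X` a category enriched in the quantale `V`, whose tensor product is written `*` and
whose unit is `1`. -/
structure IsVCategory {V X : Type*} [Monoid V] [LE V] (D : X → X → V) : Prop where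
  one_le_self : ∀ x, 1 ≤ D x x
  mul_le : ∀ x y z, D y z * D x y ≤ D x z

section Colimit

variable {V : Type*} [CompleteLattice V] {X : ℕ → Type*} {L : Type*}

/-- The supremum of the distances between representatives of `x` and `y` from stage `N` on; its
infimum over `N` is `colimDist D γ x y`. -/
def supDistFrom (D : ∀ n, X n → X n → V) (γ : ∀ n, X n → L) (N : ℕ) (x y : L) : V :=
  ⨆ n : ℕ, ⨆ _ : N ≤ n,
    ⨆ x' : {x' : X n // γ n x' = x}, ⨆ y' : {y' : X n // γ n y' = y}, D n x'.1 y'.1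

/-- The infimum of the distances between the images of `x` and `y` at the stages from `m` on: the
part of their distance which no connecting map destroys. -/
def infDistFrom (D : ∀ n, X n → X n → V) (s : ∀ {m n : ℕ}, m ≤ n → X m → X n)
    (m : ℕ) (x y : X m) : V :=
  ⨅ l : ℕ, ⨅ h : m ≤ l, D l (s h x) (s h y)

/-- The infimum of the Lipschitz norms of the connecting maps `s` between stages from `N` on. -/
def lipNormFrom [Semigroup V] (D : ∀ n, X n → X n → V)
    (s : ∀ {m n : ℕ}, m ≤ n → X m → X n) (N : ℕ) : V :=
  ⨅ m : ℕ, ⨅ n : ℕ, ⨅ _ : N ≤ m, ⨅ h : m ≤ n, lipNorm (D m) (D n) (s h)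

/-- The sequence with connecting maps `s` is Cauchy with respect to the Lipschitz norm. -/
def IsLipCauchy [Monoid V] (D : ∀ n, X n → X n → V) (s : ∀ {m n : ℕ}, m ≤ n → X m → X n) : Prop :=
  1 ≤ ⨆ N : ℕ, lipNormFrom D s N

variable {D : ∀ n, X n → X n → V} {s : ∀ {m n : ℕ}, m ≤ n → X m → X n} {γ : ∀ n, X n → L}

theorem colimDist_le_supDistFrom (N : ℕ) (x y : L) :
    colimDist D γ x y ≤ supDistFrom D γ N x y :=
  iInf_le _ N

theorem le_supDistFrom {N n : ℕ} (hn : N ≤ n) {x y : L} {x' y' : X n}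
    (hx : γ n x' = x) (hy : γ n y' = y) : D n x' y' ≤ supDistFrom D γ N x y :=
  le_iSup₂_of_le n hn <| le_iSup₂_of_le ⟨x', hx⟩ ⟨y', hy⟩ le_rfl

theorem supDistFrom_le_iff {N : ℕ} {x y : L} {t : V} :
    supDistFrom D γ N x y ≤ t ↔
      ∀ n, N ≤ n → ∀ x' y' : X n, γ n x' = x → γ n y' = y → D n x' y' ≤ t := by
  simp only [supDistFrom, iSup_le_iff, Subtype.forall]
  exact forall₃_congr fun _ _ _ => forall_comm

theorem infDistFrom_le {m l : ℕ} (h : m ≤ l) (x y : X m) :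
    infDistFrom D s m x y ≤ D l (s h x) (s h y) :=
  iInf₂_le l h

theorem le_colimDist_self {k : V} (hrefl : ∀ n (x : X n), k ≤ D n x x)
    (hγ : ∀ {m n : ℕ} (h : m ≤ n) (x : X m), γ m x = γ n (s h x))
    (hsurj : ∀ l : L, ∃ (n : ℕ) (x : X n), γ n x = l) (x : L) : k ≤ colimDist D γ x x := by
  refine le_iInf fun N => ?_
  obtain ⟨n, x', hx⟩ := hsurj x
  have hlate : γ (max n N) (s (le_max_left n N) x') = x := (hγ _ x').symm.trans hx
  exact (hrefl _ _).trans (le_supDistFrom (le_max_right n N) hlate hlate)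

theorem mul_supDistFrom_le_iff [Semigroup V] [IsQuantale V] {N : ℕ} {x y : L} {a t : V} :
    a * supDistFrom D γ N x y ≤ t ↔
      ∀ n, N ≤ n → ∀ x' y' : X n, γ n x' = x → γ n y' = y → a * D n x' y' ≤ t := by
  simp only [← Quantale.rightMulResiduation_le_iff_mul_le, supDistFrom_le_iff]

theorem supDistFrom_mul_le_iff [Semigroup V] [IsQuantale V] {N : ℕ} {x y : L} {a t : V} :
    supDistFrom D γ N x y * a ≤ t ↔
      ∀ n, N ≤ n → ∀ x' y' : X n, γ n x' = x → γ n y' = y → D n x' y' * a ≤ t := by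
  simp only [← Quantale.leftMulResiduation_le_iff_mul_le, supDistFrom_le_iff]

theorem lipNormFrom_mul_le_infDistFrom [Semigroup V] [IsQuantale V] {N m : ℕ} (hm : N ≤ m)
    (x y : X m) : lipNormFrom D s N * D m x y ≤ infDistFrom D s m x y := by
  refine le_iInf₂ fun l h => ?_
  have hnorm : lipNormFrom D s N ≤ lipNorm (D m) (D l) (s h) :=
    (iInf₂_le m l).trans (iInf₂_le hm h)
  exact (mul_le_mul_left hnorm _).trans (lipNorm_mul_le _ _ _ x y)

theorem IsLipCauchy.colimDist_le_supDistFrom_infDistFrom [Monoid V] [IsQuantale V]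
    (hs : IsLipCauchy D s) (M : ℕ) (x y : L) :
    colimDist D γ x y ≤ supDistFrom (infDistFrom D s) γ M x y := by
  have hstage (N : ℕ) :
      lipNormFrom D s N * colimDist D γ x y ≤ supDistFrom (infDistFrom D s) γ M x y := by
    refine (mul_le_mul_right (colimDist_le_supDistFrom (max M N) x y) _).trans ?_
    refine mul_supDistFrom_le_iff.mpr fun m hm x' y' hx hy => ?_
    exact (lipNormFrom_mul_le_infDistFrom (le_of_max_le_right hm) x' y').trans
      (le_supDistFrom (le_of_max_le_left hm) hx hy)
  calc colimDist D γ x y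
      = 1 * colimDist D γ x y := (one_mul _).symm
    _ ≤ (⨆ N, lipNormFrom D s N) * colimDist D γ x y := mul_le_mul_left hs _
    _ = ⨆ N, lipNormFrom D s N * colimDist D γ x y := Quantale.iSup_mul_distrib
    _ ≤ supDistFrom (infDistFrom D s) γ M x y := iSup_le hstage

theorem supDistFrom_infDistFrom_mul_le [Semigroup V] [IsQuantale V]
    (htrans : ∀ n (x y z : X n), D n y z * D n x y ≤ D n x z)
    (hγ : ∀ {m n : ℕ} (h : m ≤ n) (x : X m), γ m x = γ n (s h x))
    (hcoeq : ∀ (m n : ℕ) (x : X m) (y : X n), γ m x = γ n y →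
      ∃ (l : ℕ) (h₁ : m ≤ l) (h₂ : n ≤ l), s h₁ x = s h₂ y)
    (M N : ℕ) (x y z : L) :
    supDistFrom (infDistFrom D s) γ M y z * supDistFrom (infDistFrom D s) γ N x y ≤
      supDistFrom D γ N x z := by
  refine supDistFrom_mul_le_iff.mpr fun n _ y₂ z₂ hy₂ hz₂ => ?_
  refine mul_supDistFrom_le_iff.mpr fun m hm x₁ y₁ hx₁ hy₁ => ?_
  obtain ⟨l, hml, hnl, hl⟩ := hcoeq m n y₁ y₂ (hy₁.trans hy₂.symm)
  calc infDistFrom D s n y₂ z₂ * infDistFrom D s m x₁ y₁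
      ≤ D l (s hnl y₂) (s hnl z₂) * D l (s hml x₁) (s hml y₁) :=
        mul_le_mul' (infDistFrom_le hnl y₂ z₂) (infDistFrom_le hml x₁ y₁)
    _ = D l (s hml y₁) (s hnl z₂) * D l (s hml x₁) (s hml y₁) := by rw [hl]
    _ ≤ D l (s hml x₁) (s hnl z₂) := htrans l _ _ _
    _ ≤ supDistFrom D γ N x z :=
        le_supDistFrom (hm.trans hml) ((hγ hml x₁).symm.trans hx₁) ((hγ hnl z₂).symm.trans hz₂)

end Colimit

theorem stmt11_general {V : Type*} [Monoid V] [CompleteLattice V] [IsQuantale V] {X : ℕ → Type*}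
    {D : ∀ n, X n → X n → V} (hD : ∀ n, IsVCategory (D n))
    {s : ∀ {m n : ℕ}, m ≤ n → X m → X n} (hs : IsLipCauchy D s) {L : Type*} {γ : ∀ n, X n → L}
    (hγ : ∀ {m n : ℕ} (h : m ≤ n) (x : X m), γ m x = γ n (s h x))
    (hsurj : ∀ l : L, ∃ (n : ℕ) (x : X n), γ n x = l)
    (hcoeq : ∀ (m n : ℕ) (x : X m) (y : X n), γ m x = γ n y →
      ∃ (l : ℕ) (h₁ : m ≤ l) (h₂ : n ≤ l), s h₁ x = s h₂ y) :
    IsVCategory (colimDist D γ) where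
  one_le_self := le_colimDist_self (fun n => (hD n).one_le_self) hγ hsurj
  mul_le x y z := le_iInf fun N =>
    (mul_le_mul' (hs.colimDist_le_supDistFrom_infDistFrom N y z)
      (hs.colimDist_le_supDistFrom_infDistFrom N x y)).trans
      (supDistFrom_infDistFrom_mul_le (fun n => (hD n).mul_le) hγ hcoeq N N x y z)

/-- If the unit `k` of a commutative quantale `V` is approximated
from totally below, then for a Cauchy sequence of `V`-categories (in the
Lipschitz norm), a colimit cocone `γ` of the underlying sets, and the canonical
distance `D` on the vertex, `(X, D)` is again a `V`-category. -/
theorem stmt11 {V : Type*} [CompleteLattice V]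
    (mul : V → V → V) (k : V) (hom : V → V → V)
    (hmul_comm : ∀ u v : V, mul u v = mul v u)
    (hmul_assoc : ∀ u v w : V, mul (mul u v) w = mul u (mul v w))
    (hmul_unit : ∀ u : V, mul u k = u)
    (hmul_sSup : ∀ (u : V) (S : Set V), mul u (sSup S) = ⨆ v ∈ S, mul u v)
    (hhom : ∀ u v w : V, mul w u ≤ v ↔ w ≤ hom u v)
    (happrox : k = sSup {ε : V | ∀ S : Set V, k ≤ sSup S → ∃ s ∈ S, ε ≤ s})
    (X : ℕ → Type*) (D : ∀ n, X n → X n → V)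
    (hrefl : ∀ (n : ℕ) (x : X n), k ≤ D n x x)
    (htrans : ∀ (n : ℕ) (x y z : X n), mul (D n y z) (D n x y) ≤ D n x z)
    (s : ∀ {m n : ℕ}, m ≤ n → X m → X n)
    (hs_id : ∀ (n : ℕ) (x : X n), s (le_refl n) x = x)
    (hs_comp : ∀ {m n l : ℕ} (h₁ : m ≤ n) (h₂ : n ≤ l) (x : X m),
      s h₂ (s h₁ x) = s (h₁.trans h₂) x)
    (hCauchy : k ≤ ⨆ N : ℕ, ⨅ m : ℕ, ⨅ n : ℕ, ⨅ _ : N ≤ m, ⨅ h : m ≤ n,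
      ⨅ x : X m, ⨅ y : X m, hom (D m x y) (D n (s h x) (s h y)))
    {L : Type*} (γ : ∀ n, X n → L)
    (hγ : ∀ {m n : ℕ} (h : m ≤ n) (x : X m), γ m x = γ n (s h x))
    (hsurj : ∀ l : L, ∃ (n : ℕ) (x : X n), γ n x = l)
    (hcoeq : ∀ (m n : ℕ) (x : X m) (y : X n), γ m x = γ n y →
      ∃ (l : ℕ) (h₁ : m ≤ l) (h₂ : n ≤ l), s h₁ x = s h₂ y) :
    (∀ x : L, k ≤ colimDist D γ x x)
      ∧ (∀ x y z : L,
          mul (colimDist D γ x y) (colimDist D γ y z) ≤ colimDist D γ x z) := by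
  let _ : CommMonoid V := commMonoidOfMul mul k hmul_comm hmul_assoc hmul_unit
  have : IsQuantale V := isQuantale_of_mul_sSup hmul_sSup
  obtain rfl := eq_leftMulResiduation hhom
  have hcolim : IsVCategory (colimDist D γ) :=
    stmt11_general (fun n => ⟨hrefl n, htrans n⟩) (s := @s) hCauchy hγ hsurj hcoeq
  exact ⟨hcolim.one_le_self, fun x y z => (hmul_comm _ _).trans_le (hcolim.mul_le x y z)⟩
end

section
/- Let (X_n, D_n)_{n ∈ ℕ} be a sequence of Lawvere metric spaces (sets X_n with D_n : X_n → X_n → ℝ≥0∞ satisfying D_n x x = 0 and D_n x z ≤ D_n x y + D_n y z) with connecting maps s_{m,n} : X_m → X_n for m ≤ n (s_{n,n} = id, s_{n,l} ∘ s_{m,n} = s_{m,l}), which is Cauchy with respect to the multiplicative Lipschitz norm L(f) = ⨆_{x,y} D'(f x, f y) / D(x,y) (division in ℝ≥0∞), i.e., ⨅_{N ∈ ℕ} ⨆_{N ≤ m ≤ n} L(s_{m,n}) ≤ 1. Let γ_n : X_n → X be a colimit cocone of the underlying sequence of sets (γ_m = γ_n ∘ s_{m,n}; every x ∈ X equals γ_n(x')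 for some n, x'; and γ_n x' = γ_m x'' implies s_{n,l} x' = s_{m,l} x'' for some l ≥ n, m). Define D(x,y) = ⨆_{N ∈ ℕ} ⨅_{n ≥ N} ⨅_{x' ∈ γ_n⁻¹(x), y' ∈ γ_n⁻¹(y)} D_n x' y'. Then (X, D) is a Lawvere metric space: D x x = 0 for all x, and D x z ≤ D x y + D y z for all x, y, z. -/
/-!
A `c`-Lipschitz bound on the late connecting maps yields the triangle inequality on the colimit
relaxed by the factor `c`: representatives of `(x, y)` and `(y, z)` that nearly realise the two
distances can be pushed to a common later stage at which the two representatives of `y` agree, and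
the triangle inequality holds there. The Cauchy condition provides such a bound for every `c > 1`,
so letting `c` tend to `1` concludes.
-/


open scoped ENNReal

/-- The distance on the vertex of a cocone `γ` over a sequence of Lawvere
metric spaces: `D(x,y) = ⨆_N ⨅_{n ≥ N} ⨅_{x' ∈ γ_n⁻¹(x), y' ∈ γ_n⁻¹(y)} D_n x' y'`
(the order of `[0,∞]` as a quantale is the opposite of the usual order, so
suprema and infima are interchanged). -/
noncomputable def colimDistE {X : ℕ → Type*}
    (D : ∀ n, X n → X n → ℝ≥0∞) {L : Type*} (γ : ∀ n, X n → L) (x y : L) : ℝ≥0∞ :=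
  ⨆ N : ℕ, ⨅ n : ℕ, ⨅ _ : N ≤ n,
    ⨅ x' : {x' : X n // γ n x' = x}, ⨅ y' : {y' : X n // γ n y' = y}, D n x'.1 y'.1

section Order

theorem le_add_of_forall_gt_of_dense {α : Type*} [LinearOrder α] [DenselyOrdered α]
    [AddCommSemigroup α] [Sub α] [OrderedSub α] {a b t : α}
    (h : ∀ r > a, ∀ q > b, t ≤ r + q) : t ≤ a + b := by
  rw [← tsub_le_iff_left]
  refine le_of_forall_gt_imp_ge_of_dense fun q hq => ?_
  rw [tsub_le_iff_left, ← tsub_le_iff_right]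
  exact le_of_forall_gt_imp_ge_of_dense fun r hr => tsub_le_iff_right.2 (h r hr q hq)

theorem le_of_forall_one_lt_ne_top_le_mul {a b : ℝ≥0∞}
    (h : ∀ c : ℝ≥0∞, 1 < c → c ≠ ∞ → a ≤ c * b) : a ≤ b := by
  rw [← one_mul b]
  refine ENNReal.le_mul_of_forall_lt (.inl one_ne_zero) (.inl ENNReal.one_ne_top)
    fun c hc b' hb' => ?_
  obtain rfl | hc_top := eq_or_ne c ∞
  · simp [ENNReal.top_mul hb'.ne_bot]
  · exact (h c hc hc_top).trans (by gcongr)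

end Order

section LipschitzNorm

variable {α β : Type*}

/-- The multiplicative Lipschitz norm `L(f) = ⨆_{x,y} d' (f x) (f y) / d x y` of a map
`f : (α, d) → (β, d')`, with division in `ℝ≥0∞`: `0 / 0 = 0`, `b / 0 = ∞` for `b ≠ 0`, and
`b / ∞ = 0`. -/
noncomputable def lipschitzNorm (d : α → α → ℝ≥0∞) (d' : β → β → ℝ≥0∞) (f : α → β) : ℝ≥0∞ :=
  ⨆ x : α, ⨆ y : α, d' (f x) (f y) / d x y

-- `c = ∞` must be excluded: `b / 0 ≤ ∞` always holds, but `∞ * 0 = 0`.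
theorem le_mul_of_lipschitzNorm_le {d : α → α → ℝ≥0∞} {d' : β → β → ℝ≥0∞} {f : α → β}
    {c : ℝ≥0∞} (hc₀ : c ≠ 0) (hc : c ≠ ∞) (hf : lipschitzNorm d d' f ≤ c) (x y : α) :
    d' (f x) (f y) ≤ c * d x y := by
  rw [← ENNReal.div_le_iff_le_mul (.inr hc) (.inr hc₀)]
  exact iSup₂_le_iff.1 hf x y

end LipschitzNorm

section DirectedColimit

variable {ι : Type*} [Preorder ι] {X : ι → Type*} {L : Type*}

/-- The distance `D(x,y) = ⨆_N ⨅_{n ≥ N} ⨅_{x' ∈ γ_n⁻¹(x), y' ∈ γ_n⁻¹(y)} D_n x' y'` on the vertex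
of a cocone `γ` over a family indexed by a preorder; over `ℕ` it is `colimDistE` by definition. -/
noncomputable def directedColimDist (D : ∀ n, X n → X n → ℝ≥0∞) (γ : ∀ n, X n → L) (x y : L) :
    ℝ≥0∞ :=
  ⨆ N : ι, ⨅ n : ι, ⨅ _ : N ≤ n,
    ⨅ x' : {x' : X n // γ n x' = x}, ⨅ y' : {y' : X n // γ n y' = y}, D n x'.1 y'.1

/-- The quantity `⨅_N ⨆_{N ≤ m ≤ n} L(s_{m,n})`; the family of connecting maps `s` is Cauchy for the
multiplicative Lipschitz norm when it is at most `1`. -/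
noncomputable def lipschitzCauchyModulus (D : ∀ n, X n → X n → ℝ≥0∞)
    (s : ∀ {m n : ι}, m ≤ n → X m → X n) : ℝ≥0∞ :=
  ⨅ N : ι, ⨆ m : ι, ⨆ n : ι, ⨆ _ : N ≤ m, ⨆ h : m ≤ n, lipschitzNorm (D m) (D n) (s h)

variable {D : ∀ n, X n → X n → ℝ≥0∞} {s : ∀ {m n : ι}, m ≤ n → X m → X n} {γ : ∀ n, X n → L}

theorem exists_forall_le_mul_of_lipschitzCauchyModulus_lt {c : ℝ≥0∞} (hc : c ≠ ∞)
    (hs : lipschitzCauchyModulus D s < c) :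
    ∃ N, ∀ {m n : ι} (h : m ≤ n), N ≤ m → ∀ x y : X m, D n (s h x) (s h y) ≤ c * D m x y := by
  obtain ⟨N, hN⟩ := iInf_lt_iff.1 hs
  have h_norm : ∀ m n : ι, N ≤ m → ∀ h : m ≤ n, lipschitzNorm (D m) (D n) (s h) ≤ c := by
    simpa only [iSup_le_iff] using hN.le
  exact ⟨N, fun h hm => le_mul_of_lipschitzNorm_le hs.ne_bot hc (h_norm _ _ hm h)⟩

theorem directedColimDist_le {x y : L} {r : ℝ≥0∞}
    (h : ∀ N, ∃ n ≥ N, ∃ x' y' : X n, γ n x' = x ∧ γ n y' = y ∧ D n x' y' ≤ r) :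
    directedColimDist D γ x y ≤ r := by
  refine iSup_le fun N => ?_
  obtain ⟨n, hn, x', y', hx, hy, hr⟩ := h N
  exact iInf₂_le_of_le n hn <| iInf₂_le_of_le ⟨x', hx⟩ ⟨y', hy⟩ hr

theorem exists_lt_of_directedColimDist_lt {x y : L} {r : ℝ≥0∞}
    (h : directedColimDist D γ x y < r) (N : ι) :
    ∃ n ≥ N, ∃ x' y' : X n, γ n x' = x ∧ γ n y' = y ∧ D n x' y' < r := by
  have hN := (le_iSup (fun N : ι => ⨅ n : ι, ⨅ _ : N ≤ n, ⨅ x' : {x' : X n // γ n x' = x},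
    ⨅ y' : {y' : X n // γ n y' = y}, D n x'.1 y'.1) N).trans_lt h
  simp only [iInf_lt_iff] at hN
  obtain ⟨n, hn, ⟨x', hx⟩, ⟨y', hy⟩, hr⟩ := hN
  exact ⟨n, hn, x', y', hx, hy, hr⟩

theorem exists_le_mul_add_of_map_eq
    (hD_tri : ∀ (n : ι) (x y z : X n), D n x z ≤ D n x y + D n y z)
    (hγ : ∀ {m n : ι} (h : m ≤ n) (x : X m), γ m x = γ n (s h x))
    (hcoeq : ∀ (m n : ι) (x : X m) (y : X n), γ m x = γ n y →
      ∃ (l : ι) (h₁ : m ≤ l) (h₂ : n ≤ l), s h₁ x = s h₂ y)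
    {c : ℝ≥0∞} {N : ι}
    (hLip : ∀ {m n : ι} (h : m ≤ n), N ≤ m → ∀ x y : X m, D n (s h x) (s h y) ≤ c * D m x y)
    {m n : ι} (hm : N ≤ m) (hn : N ≤ n) (x y₁ : X m) (y₂ z : X n) (hy : γ m y₁ = γ n y₂) :
    ∃ l ≥ m, ∃ x' z' : X l,
      γ l x' = γ m x ∧ γ l z' = γ n z ∧ D l x' z' ≤ c * (D m x y₁ + D n y₂ z) := by
  obtain ⟨l, hml, hnl, hl⟩ := hcoeq m n y₁ y₂ hy
  refine ⟨l, hml, s hml x, s hnl z, (hγ hml x).symm, (hγ hnl z).symm, ?_⟩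
  calc D l (s hml x) (s hnl z)
      ≤ D l (s hml x) (s hml y₁) + D l (s hnl y₂) (s hnl z) := hl ▸ hD_tri l _ _ _
    _ ≤ c * D m x y₁ + c * D n y₂ z := add_le_add (hLip hml hm x y₁) (hLip hnl hn y₂ z)
    _ = c * (D m x y₁ + D n y₂ z) := (mul_add _ _ _).symm

variable [IsDirectedOrder ι]

theorem directedColimDist_self (hD_refl : ∀ (n : ι) (x : X n), D n x x = 0)
    (hγ : ∀ {m n : ι} (h : m ≤ n) (x : X m), γ m x = γ n (s h x))
    {x : L} (hx : ∃ (n : ι) (x' : X n), γ n x' = x) : directedColimDist D γ x x = 0 := by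
  obtain ⟨m, x', rfl⟩ := hx
  refine le_antisymm (directedColimDist_le fun N => ?_) zero_le
  obtain ⟨n, hN, hm⟩ := exists_ge_ge N m
  exact ⟨n, hN, s hm x', s hm x', (hγ hm x').symm, (hγ hm x').symm, (hD_refl n _).le⟩

theorem directedColimDist_le_mul_add
    (hD_tri : ∀ (n : ι) (x y z : X n), D n x z ≤ D n x y + D n y z)
    (hγ : ∀ {m n : ι} (h : m ≤ n) (x : X m), γ m x = γ n (s h x))
    (hcoeq : ∀ (m n : ι) (x : X m) (y : X n), γ m x = γ n y →
      ∃ (l : ι) (h₁ : m ≤ l) (h₂ : n ≤ l), s h₁ x = s h₂ y)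
    {c : ℝ≥0∞} (hc₀ : c ≠ 0) (hc : c ≠ ∞) {N₀ : ι}
    (hLip : ∀ {m n : ι} (h : m ≤ n), N₀ ≤ m → ∀ x y : X m, D n (s h x) (s h y) ≤ c * D m x y)
    (x y z : L) :
    directedColimDist D γ x z ≤ c * (directedColimDist D γ x y + directedColimDist D γ y z) := by
  rw [← ENNReal.div_le_iff' hc₀ hc]
  refine le_add_of_forall_gt_of_dense fun r hr q hq => ?_
  rw [ENNReal.div_le_iff' hc₀ hc]
  refine directedColimDist_le fun N => ?_
  obtain ⟨M, hNM, hN₀M⟩ := exists_ge_ge N N₀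
  obtain ⟨m, hm, x', y₁, rfl, hy₁, hxy⟩ := exists_lt_of_directedColimDist_lt hr M
  obtain ⟨n, hn, y₂, z', hy₂, rfl, hyz⟩ := exists_lt_of_directedColimDist_lt hq M
  obtain ⟨l, hml, x'', z'', hx, hz, hxz⟩ := exists_le_mul_add_of_map_eq hD_tri hγ hcoeq hLip
    (hN₀M.trans hm) (hN₀M.trans hn) x' y₁ y₂ z' (hy₁.trans hy₂.symm)
  exact ⟨l, hNM.trans (hm.trans hml), x'', z'', hx, hz, hxz.trans (by gcongr)⟩

theorem stmt12_general (D : ∀ n, X n → X n → ℝ≥0∞)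
    (hD_refl : ∀ (n : ι) (x : X n), D n x x = 0)
    (hD_tri : ∀ (n : ι) (x y z : X n), D n x z ≤ D n x y + D n y z)
    (s : ∀ {m n : ι}, m ≤ n → X m → X n)
    (hCauchy : lipschitzCauchyModulus D s ≤ 1)
    (γ : ∀ n, X n → L)
    (hγ : ∀ {m n : ι} (h : m ≤ n) (x : X m), γ m x = γ n (s h x))
    (hsurj : ∀ l : L, ∃ (n : ι) (x : X n), γ n x = l)
    (hcoeq : ∀ (m n : ι) (x : X m) (y : X n), γ m x = γ n y →
      ∃ (l : ι) (h₁ : m ≤ l) (h₂ : n ≤ l), s h₁ x = s h₂ y) :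
    (∀ x : L, directedColimDist D γ x x = 0)
      ∧ (∀ x y z : L, directedColimDist D γ x z ≤
          directedColimDist D γ x y + directedColimDist D γ y z) := by
  refine ⟨fun x => directedColimDist_self hD_refl hγ (hsurj x), fun x y z => ?_⟩
  refine le_of_forall_one_lt_ne_top_le_mul fun c hc hc_top => ?_
  obtain ⟨N, hLip⟩ :=
    exists_forall_le_mul_of_lipschitzCauchyModulus_lt hc_top (hCauchy.trans_lt hc)
  exact directedColimDist_le_mul_add hD_tri hγ hcoeq (one_pos.trans hc).ne' hc_top hLip x y z

end DirectedColimit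

/-- Given a sequence of Lawvere metric spaces which is Cauchy for
the multiplicative Lipschitz norm `L(f) = ⨆_{x,y} D'(f x, f y) / D(x, y)`, a
colimit cocone `γ` of the underlying sets, and the canonical distance `D` on
the vertex, `(X, D)` is again a Lawvere metric space. -/
theorem stmt12 (X : ℕ → Type*) (D : ∀ n, X n → X n → ℝ≥0∞)
    (hD_refl : ∀ (n : ℕ) (x : X n), D n x x = 0)
    (hD_tri : ∀ (n : ℕ) (x y z : X n), D n x z ≤ D n x y + D n y z)
    (s : ∀ {m n : ℕ}, m ≤ n → X m → X n)
    (hs_id : ∀ (n : ℕ) (x : X n), s (le_refl n) x = x)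
    (hs_comp : ∀ {m n l : ℕ} (h₁ : m ≤ n) (h₂ : n ≤ l) (x : X m),
      s h₂ (s h₁ x) = s (h₁.trans h₂) x)
    (hCauchy : (⨅ N : ℕ, ⨆ m : ℕ, ⨆ n : ℕ, ⨆ _ : N ≤ m, ⨆ h : m ≤ n,
        ⨆ x : X m, ⨆ y : X m, D n (s h x) (s h y) / D m x y) ≤ 1)
    {L : Type*} (γ : ∀ n, X n → L)
    (hγ : ∀ {m n : ℕ} (h : m ≤ n) (x : X m), γ m x = γ n (s h x))
    (hsurj : ∀ l : L, ∃ (n : ℕ) (x : X n), γ n x = l)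
    (hcoeq : ∀ (m n : ℕ) (x : X m) (y : X n), γ m x = γ n y →
      ∃ (l : ℕ) (h₁ : m ≤ l) (h₂ : n ≤ l), s h₁ x = s h₂ y) :
    (∀ x : L, colimDistE D γ x x = 0)
      ∧ (∀ x y z : L,
          colimDistE D γ x z ≤ colimDistE D γ x y + colimDistE D γ y z) :=
  stmt12_general D hD_refl hD_tri s hCauchy γ hγ hsurj hcoeq
end
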